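/- Let E be a unital idempotent CPTP map on d×d complex matrices, let a ∈ (0,1)∪(1,2], let ρ be a positive definite density matrix, set N = Tr((E(ρ^a))^{1/a}) and σ* = (E(ρ^a))^{1/a}/N. Then for every positive definite density matrix σ with E(σ) = σ one has (Tr(ρ^a σ^{1−a}))^{1/a} = N · (Tr((σ*)^a σ^{1−a}))^{1/a}, and consequently S̃_a(ρ|σ) = (N − 1)/(a − 1) + N · S̃_a(σ*|σ). -/

import Mathlib

open Matrix
open scoped ComplexOrder

/-- Matrix power `A ^ t` for real `t`, via the continuous functional calculus
(applying `x ↦ x ^ t` to the eigenvalues of a Hermitian matrix `A`). -/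
noncomputable def mpow {d : ℕ} (A : Matrix (Fin d) (Fin d) ℂ) (t : ℝ) :
    Matrix (Fin d) (Fin d) ℂ :=
  cfc (fun x : ℝ => x ^ t) A

/-- The Tsallis-based relative entropy
`S̃_a(ρ|σ) = ((Tr (ρ^a σ^(1-a)))^(1/a) - 1) / (a - 1)`. -/
noncomputable def tsallis {d : ℕ} (a : ℝ) (ρ σ : Matrix (Fin d) (Fin d) ℂ) : ℝ :=
  ((((mpow ρ a * mpow σ (1 - a)).trace).re) ^ (1 / a) - 1) / (a - 1)

/-! Let `E X = ∑ i, K i * X * (K i)ᴴ` be unital and trace preserving, with `E σ = σ`. The defect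
`E (σ σᴴ) - σ σᴴ` equals `∑ i, [K i, σ] [K i, σ]ᴴ` and has trace zero, so `σ` commutes with every
`K i`. Hence so does `σ^(1-a)`, and by duality `Tr (ρ^a σ^(1-a)) = Tr (E(ρ^a) σ^(1-a))`. Moreover
`E(ρ^a) = B^a` with `B = E(ρ^a)^(1/a) = N σ*`, and `B ↦ (Tr (B^a σ^(1-a)))^(1/a)` is homogeneous of
degree one on positive semidefinite matrices. -/

section KrausMap

variable {ι m n R : Type*} [Fintype ι]

/-- The completely positive map `X ↦ ∑ i, K i * X * (K i)ᴴ` with Kraus operators `K i`. Its dual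
with respect to the trace pairing is `krausMap fun i ↦ (K i)ᴴ`. -/
def krausMap [Fintype n] [NonUnitalSemiring R] [Star R] (K : ι → Matrix m n R)
    (X : Matrix n n R) : Matrix m m R :=
  ∑ i, K i * X * (K i)ᴴ

lemma krausMap_conjTranspose [Fintype n] [NonUnitalSemiring R] [StarRing R]
    (K : ι → Matrix m n R) (X : Matrix n n R) : krausMap K Xᴴ = (krausMap K X)ᴴ := by
  simp only [krausMap, conjTranspose_sum, conjTranspose_mul, conjTranspose_conjTranspose,
    Matrix.mul_assoc]

lemma posSemidef_krausMap [Finite m] [Fintype n] [Ring R] [PartialOrder R] [StarRing R]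
    [AddLeftMono R] (K : ι → Matrix m n R) {X : Matrix n n R} (hX : X.PosSemidef) :
    (krausMap K X).PosSemidef :=
  posSemidef_sum _ fun i _ ↦ hX.mul_mul_conjTranspose_same (K i)

lemma trace_krausMap_mul [Fintype m] [Fintype n] [CommSemiring R] [StarRing R]
    (K : ι → Matrix m n R) (X : Matrix n n R) (Y : Matrix m m R) :
    (krausMap K X * Y).trace = (X * krausMap (fun i ↦ (K i)ᴴ) Y).trace := by
  simp only [krausMap, Matrix.sum_mul, Matrix.mul_sum, trace_sum, conjTranspose_conjTranspose]
  refine Finset.sum_congr rfl fun i _ ↦ ?_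
  rw [Matrix.mul_assoc, Matrix.mul_assoc, trace_mul_comm]
  simp only [Matrix.mul_assoc]

variable [Fintype n] [DecidableEq n]

lemma krausMap_dual_eq_self_of_commute [Semiring R] [StarRing R]
    {K : ι → Matrix n n R} (hTP : ∑ i, (K i)ᴴ * K i = 1) {Y : Matrix n n R}
    (hY : ∀ i, Commute Y (K i)) : krausMap (fun i ↦ (K i)ᴴ) Y = Y := by
  simp only [krausMap, conjTranspose_conjTranspose, Matrix.mul_assoc, (hY _).eq]
  simp only [← Matrix.mul_assoc, ← Matrix.sum_mul, hTP, Matrix.one_mul]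

lemma trace_krausMap [CommSemiring R] [StarRing R] {K : ι → Matrix n n R}
    (hTP : ∑ i, (K i)ᴴ * K i = 1) (X : Matrix n n R) : (krausMap K X).trace = X.trace := by
  simpa only [Matrix.mul_one,
    krausMap_dual_eq_self_of_commute hTP fun i ↦ Commute.one_left (K i)]
    using trace_krausMap_mul K X 1

lemma sum_commutator_mul_conjTranspose [Ring R] [StarRing R] (K : ι → Matrix n n R)
    (X : Matrix n n R) :
    ∑ i, (K i * X - X * K i) * (K i * X - X * K i)ᴴ
      = krausMap K (X * Xᴴ) - krausMap K X * Xᴴ - X * (krausMap K X)ᴴ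
        + X * krausMap K 1 * Xᴴ := by
  rw [← krausMap_conjTranspose]
  simp only [krausMap, Matrix.sum_mul, Matrix.mul_sum, ← Finset.sum_sub_distrib,
    ← Finset.sum_add_distrib, conjTranspose_sub, conjTranspose_mul]
  refine Finset.sum_congr rfl fun i _ ↦ ?_
  noncomm_ring

lemma commute_of_krausMap_eq_self [CommRing R] [PartialOrder R] [StarRing R] [StarOrderedRing R]
    [NoZeroDivisors R] {K : ι → Matrix n n R} (hTP : ∑ i, (K i)ᴴ * K i = 1)
    (hU : krausMap K 1 = 1) {X : Matrix n n R} (hX : krausMap K X = X) (i : ι) :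
    Commute X (K i) := by
  have hsum : ∑ j, ((K j * X - X * K j) * (K j * X - X * K j)ᴴ).trace = 0 := by
    rw [← trace_sum, sum_commutator_mul_conjTranspose, hX, hU, Matrix.mul_one, sub_add_cancel,
      trace_sub, trace_krausMap hTP, sub_self]
  have hi := (Finset.sum_eq_zero_iff_of_nonneg fun j _ ↦
    (posSemidef_self_mul_conjTranspose (K j * X - X * K j)).trace_nonneg).mp hsum i
      (Finset.mem_univ i)
  exact (sub_eq_zero.mp (trace_mul_conjTranspose_self_eq_zero_iff.mp hi)).symm

lemma trace_krausMap_mul_cfc {𝕜 : Type*} [RCLike 𝕜] {K : ι → Matrix n n 𝕜}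
    (hTP : ∑ i, (K i)ᴴ * K i = 1) (hU : krausMap K 1 = 1) {σ : Matrix n n 𝕜}
    (hσ : krausMap K σ = σ) (f : ℝ → ℝ) (X : Matrix n n 𝕜) :
    (krausMap K X * cfc f σ).trace = (X * cfc f σ).trace := by
  rw [trace_krausMap_mul, krausMap_dual_eq_self_of_commute hTP fun i ↦
    (commute_of_krausMap_eq_self hTP hU hσ i).cfc_real f]

end KrausMap

section PosSemidef

variable {n 𝕜 : Type*} [Fintype n] [RCLike 𝕜]

open scoped MatrixOrder in
lemma trace_mul_nonneg_of_posSemidef {A B : Matrix n n 𝕜} (hA : A.PosSemidef)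
    (hB : B.PosSemidef) : 0 ≤ (A * B).trace := by
  classical
  obtain ⟨C, rfl⟩ := CStarAlgebra.nonneg_iff_eq_star_mul_self.mp hA.nonneg
  rw [star_eq_conjTranspose, Matrix.mul_assoc, trace_mul_comm]
  exact (hB.mul_mul_conjTranspose_same C).trace_nonneg

lemma re_trace_smul_inv_re_trace_smul {A : Matrix n n 𝕜} (hA : A.PosSemidef) :
    RCLike.re A.trace • (RCLike.re A.trace)⁻¹ • A = A := by
  by_cases h : RCLike.re A.trace = 0
  · have htrace : A.trace = 0 :=
      RCLike.ext (by simpa using h) (by simpa using (RCLike.nonneg_iff.mp hA.trace_nonneg).2)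
    rw [hA.trace_eq_zero_iff.mp htrace, smul_zero, smul_zero]
  · exact smul_inv_smul₀ h A

end PosSemidef

section MatrixPower

variable {d : ℕ} {A T : Matrix (Fin d) (Fin d) ℂ}

open scoped MatrixOrder in
lemma posSemidef_mpow (hA : A.PosSemidef) (t : ℝ) : (mpow A t).PosSemidef :=
  nonneg_iff_posSemidef.mp <| cfc_nonneg fun _ hx ↦
    Real.rpow_nonneg (spectrum_nonneg_of_nonneg hA.nonneg hx) t

open scoped MatrixOrder in
lemma mpow_mpow_one_div (hA : A.PosSemidef) {a : ℝ} (ha : a ≠ 0) :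
    mpow (mpow A (1 / a)) a = A := by
  have hfin := A.finite_real_spectrum
  calc mpow (mpow A (1 / a)) a
      = cfc (fun x : ℝ ↦ (x ^ (1 / a)) ^ a) A :=
        (cfc_comp' (· ^ a) (· ^ (1 / a)) A ((hfin.image _).continuousOn _)
          (hfin.continuousOn _) hA.isHermitian).symm
    _ = cfc (fun x : ℝ ↦ x) A := cfc_congr fun x hx ↦ by
        simpa only [one_div] using Real.rpow_inv_rpow (spectrum_nonneg_of_nonneg hA.nonneg hx) ha
    _ = A := cfc_id' ℝ A hA.isHermitian

open scoped MatrixOrder in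
lemma mpow_smul (hA : A.PosSemidef) {c : ℝ} (hc : 0 ≤ c) (t : ℝ) :
    mpow (c • A) t = c ^ t • mpow A t := by
  have hfin := A.finite_real_spectrum
  calc mpow (c • A) t
      = cfc (fun x : ℝ ↦ (c * x) ^ t) A :=
        (cfc_comp_const_mul c (· ^ t) A ((hfin.image _).continuousOn _) hA.isHermitian).symm
    _ = cfc (fun x : ℝ ↦ c ^ t * x ^ t) A := cfc_congr fun x hx ↦
        Real.mul_rpow hc (spectrum_nonneg_of_nonneg hA.nonneg hx)
    _ = c ^ t • mpow A t := cfc_const_mul _ _ A (hfin.continuousOn _)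

lemma re_trace_mpow_smul_mul_rpow (hA : A.PosSemidef) (hT : T.PosSemidef) {c a : ℝ} (hc : 0 ≤ c)
    (ha : a ≠ 0) :
    ((mpow (c • A) a * T).trace.re) ^ (1 / a) = c * ((mpow A a * T).trace.re) ^ (1 / a) := by
  have hnonneg : 0 ≤ (mpow A a * T).trace.re :=
    (Complex.le_def.mp (trace_mul_nonneg_of_posSemidef (posSemidef_mpow hA a) hT)).1
  rw [mpow_smul hA hc, Matrix.smul_mul, trace_smul, Complex.smul_re, smul_eq_mul,
    Real.mul_rpow (Real.rpow_nonneg hc a) hnonneg, one_div, Real.rpow_rpow_inv hc ha]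

end MatrixPower

theorem stmt_4_general {ι : Type*} [Fintype ι] {d : ℕ}
    (E : Matrix (Fin d) (Fin d) ℂ → Matrix (Fin d) (Fin d) ℂ)
    (K : ι → Matrix (Fin d) (Fin d) ℂ) (hE : ∀ X, E X = krausMap K X)
    (hTP : ∑ i, (K i)ᴴ * K i = 1) (hU : E 1 = 1)
    {a : ℝ} (ha : a ∈ Set.Ioo 0 1 ∪ Set.Ioi 1)
    {ρ : Matrix (Fin d) (Fin d) ℂ} (hρ : ρ.PosSemidef)
    {N : ℝ} (hN : N = (mpow (E (mpow ρ a)) (1 / a)).trace.re)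
    {σstar : Matrix (Fin d) (Fin d) ℂ}
    (hσstar : σstar = (N : ℂ)⁻¹ • mpow (E (mpow ρ a)) (1 / a))
    {σ : Matrix (Fin d) (Fin d) ℂ} (hσ : σ.PosDef) (hEσ : E σ = σ) :
    ((mpow ρ a * mpow σ (1 - a)).trace.re) ^ (1 / a)
        = N * ((mpow σstar a * mpow σ (1 - a)).trace.re) ^ (1 / a) ∧
      tsallis a ρ σ = (N - 1) / (a - 1) + N * tsallis a σstar σ := by
  obtain rfl : E = krausMap K := funext hE
  have ha0 : a ≠ 0 := (ha.elim And.left fun h ↦ zero_lt_one.trans h).ne'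
  set B := mpow (krausMap K (mpow ρ a)) (1 / a)
  have hEρ : (krausMap K (mpow ρ a)).PosSemidef := posSemidef_krausMap K (posSemidef_mpow hρ a)
  have hB : B.PosSemidef := posSemidef_mpow hEρ _
  have hN0 : 0 ≤ N := hN ▸ (Complex.le_def.mp hB.trace_nonneg).1
  replace hσstar : σstar = N⁻¹ • B := by
    rw [hσstar, ← Complex.ofReal_inv, Complex.coe_smul]
  have hBσ : B = N • σstar := by
    rw [hσstar, hN]
    exact (re_trace_smul_inv_re_trace_smul hB).symm
  have hσstar_psd : σstar.PosSemidef := hσstar ▸ hB.smul (inv_nonneg.mpr hN0)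
  have htrace : (mpow ρ a * mpow σ (1 - a)).trace = (mpow B a * mpow σ (1 - a)).trace := by
    rw [mpow_mpow_one_div hEρ ha0]
    exact (trace_krausMap_mul_cfc hTP hU hEσ _ _).symm
  have hscale : ((mpow ρ a * mpow σ (1 - a)).trace.re) ^ (1 / a)
      = N * ((mpow σstar a * mpow σ (1 - a)).trace.re) ^ (1 / a) := by
    rw [htrace, hBσ]
    exact re_trace_mpow_smul_mul_rpow hσstar_psd (posSemidef_mpow hσ.posSemidef _) hN0 ha0
  refine ⟨hscale, ?_⟩
  rw [tsallis, tsallis, hscale]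
  ring

/-- For a unital idempotent CPTP map `E`, `a ∈ (0,1) ∪ (1,2]`, a positive definite
density matrix `ρ`, `N = Tr((E(ρ^a))^(1/a))` and `σ* = (E(ρ^a))^(1/a)/N`: for every
positive definite density matrix `σ` fixed by `E` one has
`(Tr(ρ^a σ^(1-a)))^(1/a) = N * (Tr((σ*)^a σ^(1-a)))^(1/a)` and consequently
`S̃_a(ρ|σ) = (N - 1)/(a - 1) + N * S̃_a(σ*|σ)`. -/
theorem stmt_4 {d : ℕ}
    (E : Matrix (Fin d) (Fin d) ℂ →ₗ[ℂ] Matrix (Fin d) (Fin d) ℂ)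
    (hKraus : ∃ (n : ℕ) (K : Fin n → Matrix (Fin d) (Fin d) ℂ),
      (∀ X, E X = ∑ i, K i * X * (K i)ᴴ) ∧ ∑ i, (K i)ᴴ * K i = 1)
    (hUnital : E 1 = 1)
    (hIdem : ∀ X, E (E X) = E X)
    (a : ℝ) (ha : a ∈ Set.Ioo (0 : ℝ) 1 ∪ Set.Ioc (1 : ℝ) 2)
    (ρ : Matrix (Fin d) (Fin d) ℂ) (hρ : ρ.PosDef) (hρtr : ρ.trace = 1)
    (N : ℝ) (hN : N = ((mpow (E (mpow ρ a)) (1 / a)).trace).re)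
    (σstar : Matrix (Fin d) (Fin d) ℂ)
    (hσstar : σstar = ((N : ℂ))⁻¹ • mpow (E (mpow ρ a)) (1 / a)) :
    ∀ σ : Matrix (Fin d) (Fin d) ℂ, σ.PosDef → σ.trace = 1 → E σ = σ →
      (((mpow ρ a * mpow σ (1 - a)).trace).re) ^ (1 / a)
          = N * (((mpow σstar a * mpow σ (1 - a)).trace).re) ^ (1 / a) ∧
      tsallis a ρ σ = (N - 1) / (a - 1) + N * tsallis a σstar σ := by
  obtain ⟨n, K, hK, hTP⟩ := hKraus
  exact fun σ hσ _ hEσ ↦ stmt_4_general E K hK hTP hUnital (ha.imp_right And.left) hρ.posSemidef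
    hN hσstar hσ hEσ
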